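/- arXiv:2108.07551 — 2 statements merged into one kernel-verified Lean document; each statement's English description precedes it below -/
import Mathlib

section
/- If S is an almost-clique minimal separator of a finite simple graph G, then S is minor-safe: for every connected component C of G minus S, there is a clique minor of G minus C rooted on N_G(C). -/
/-- A tree-decomposition of a graph `G` indexed by nodes of type `ι`. -/
structure TreeDecomp {V : Type} (G : SimpleGraph V) (ι : Type) where
  tree : SimpleGraph ι
  isTree : tree.IsTree
  bag : ι → Finset V
  bags_cover : ∀ v : V, ∃ i : ι, v ∈ bag i
  edges_covered : ∀ ⦃u v : V⦄, G.Adj u v → ∃ i : ι, u ∈ bag i ∧ v ∈ bag i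
  bags_connected : ∀ v : V, (tree.induce {i : ι | v ∈ bag i}).Connected

/-- The treewidth of `G`: the smallest `k` such that `G` has a tree-decomposition
all of whose bags have at most `k + 1` vertices (i.e. of width at most `k`). -/
noncomputable def treewidth {V : Type} (G : SimpleGraph V) : ℕ :=
  sInf { k : ℕ | ∃ (ι : Type) (td : TreeDecomp G ι), ∀ i : ι, (td.bag i).card ≤ k + 1 }

/-- The neighborhood `N_G(C)` of a vertex set `C`. -/
def nbhd {V : Type} (G : SimpleGraph V) (C : Set V) : Set V :=
  {v : V | v ∉ C ∧ ∃ u ∈ C, G.Adj u v}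

/-- `S` separates `a` from `b` in `G`: `a, b ∉ S` and every walk from `a` to `b` meets `S`
(so `a` and `b` lie in distinct components of `G` minus `S`). -/
def Separates {V : Type} (G : SimpleGraph V) (S : Set V) (a b : V) : Prop :=
  a ∉ S ∧ b ∉ S ∧ ∀ p : G.Walk a b, ∃ v ∈ p.support, v ∈ S

/-- `C` is a connected component of `G` minus `S`. -/
def IsCompOf {V : Type} (G : SimpleGraph V) (S : Set V) (C : Set V) : Prop :=
  C.Nonempty ∧ Disjoint C S ∧ (G.induce C).Connected ∧
    ∀ D : Set V, C ⊆ D → Disjoint D S → (G.induce D).Connected → D = C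

/-- `S` is a separator of `G`: `G` minus `S` has more than one connected component. -/
def IsSeparator {V : Type} (G : SimpleGraph V) (S : Set V) : Prop :=
  ∃ C D : Set V, IsCompOf G S C ∧ IsCompOf G S D ∧ C ≠ D

/-- `C` is a full component of `S` in `G`. -/
def IsFullCompOf {V : Type} (G : SimpleGraph V) (S : Set V) (C : Set V) : Prop :=
  IsCompOf G S C ∧ nbhd G C = S

/-- `S` is a minimal separator of `G`: it has at least two full components. -/
def IsMinSep {V : Type} (G : SimpleGraph V) (S : Set V) : Prop :=
  ∃ C D : Set V, IsFullCompOf G S C ∧ IsFullCompOf G S D ∧ C ≠ D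

/-- `R` crosses `S` if `R` separates some pair of vertices of `S`. -/
def Crosses {V : Type} (G : SimpleGraph V) (R S : Set V) : Prop :=
  ∃ a b : V, a ∈ S ∧ b ∈ S ∧ Separates G R a b

/-- `G` is chordal: every cycle with more than 3 vertices has a chord. -/
def IsChordal {V : Type} (G : SimpleGraph V) : Prop :=
  ∀ ⦃v : V⦄ (c : G.Walk v v), c.IsCycle → 3 < c.length →
    ∃ u w : V, u ∈ c.support ∧ w ∈ c.support ∧ G.Adj u w ∧ s(u, w) ∉ c.edges

/-- `H` is a triangulation of `G`. -/
def IsTriangulationOf {V : Type} (H G : SimpleGraph V) : Prop :=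
  IsChordal H ∧ G ≤ H

/-- `H` is a minimal triangulation of `G`. -/
def IsMinimalTriangulationOf {V : Type} (H G : SimpleGraph V) : Prop :=
  IsTriangulationOf H G ∧ ∀ H' : SimpleGraph V, IsTriangulationOf H' G → H' ≤ H → H' = H

/-- `K(S)`: the graph on the same vertex type whose edges join all pairs of
distinct vertices of `S`. -/
def completeOn {V : Type} (S : Set V) : SimpleGraph V :=
  SimpleGraph.fromRel (fun a b => a ∈ S ∧ b ∈ S)

/-- `s` is a maximal clique of `G`. -/
def IsMaximalClique {V : Type} (G : SimpleGraph V) (s : Set V) : Prop :=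
  G.IsClique s ∧ ∀ t : Set V, G.IsClique t → s ⊆ t → s = t

/-- `fill G td`: fill every bag of the tree-decomposition `td` into a clique. -/
def fill {V ι : Type} (G : SimpleGraph V) (td : TreeDecomp G ι) : SimpleGraph V :=
  G ⊔ SimpleGraph.fromRel (fun a b => ∃ i : ι, a ∈ td.bag i ∧ b ∈ td.bag i)

/-- The nodes of the maximal subtree `T(i,j)` of the tree containing `i` but not `j`
(for adjacent `i`, `j`): the nodes reachable from `i` after deleting the edge `{i, j}`. -/
def sideNodes {V ι : Type} {G : SimpleGraph V} (td : TreeDecomp G ι) (i j : ι) : Set ι :=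
  {t : ι | (td.tree.deleteEdges {s(i, j)}).Reachable i t}

/-- `V(i,j)`: the union of the bags of nodes in `T(i,j)`, with the vertices of the
bag of `j` removed. -/
def sideVerts {V ι : Type} {G : SimpleGraph V} (td : TreeDecomp G ι) (i j : ι) : Set V :=
  (⋃ t ∈ sideNodes td i j, (td.bag t : Set V)) \ (td.bag j : Set V)

/-- A perfect elimination order of `G`. -/
def IsPerfectElimOrder {V : Type} [Fintype V] (G : SimpleGraph V)
    (e : Fin (Fintype.card V) ≃ V) : Prop :=
  ∀ i : Fin (Fintype.card V),
    G.IsClique {u : V | G.Adj (e i) u ∧ ∃ j : Fin (Fintype.card V), i < j ∧ e j = u}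

/-- `H` is a minor of `G`, via the branch-set (minor model) characterization. -/
def IsMinorOf {W V : Type} (H : SimpleGraph W) (G : SimpleGraph V) : Prop :=
  ∃ B : W → Set V,
    (∀ w : W, (B w).Nonempty) ∧
    (∀ w : W, (G.induce (B w)).Connected) ∧
    (Pairwise fun w₁ w₂ : W => Disjoint (B w₁) (B w₂)) ∧
    ∀ ⦃w₁ w₂ : W⦄, H.Adj w₁ w₂ → ∃ a ∈ B w₁, ∃ b ∈ B w₂, G.Adj a b

/-- There is a clique minor of `G` minus `C` rooted on `R`, given by branch sets
`B v ∋ v` for `v ∈ R`: disjoint from `C`, pairwise disjoint, each connected, with an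
edge of `G` between every two of them. -/
def HasCliqueMinorRootedAvoiding {V : Type} (G : SimpleGraph V) (R C : Set V) : Prop :=
  ∃ B : R → Set V,
    (∀ v : R, (v : V) ∈ B v) ∧
    (∀ v : R, Disjoint (B v) C) ∧
    (∀ v : R, (G.induce (B v)).Connected) ∧
    (∀ u v : R, u ≠ v → Disjoint (B u) (B v)) ∧
    (∀ u v : R, u ≠ v → ∃ a ∈ B u, ∃ b ∈ B v, G.Adj a b)

/-- `S` is a minor-safe separator of `G`: for every component `C` of `G` minus `S`,
there is a clique minor of `G` minus `C` rooted on `N_G(C)`. -/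
def MinorSafe {V : Type} (G : SimpleGraph V) (S : Set V) : Prop :=
  ∀ C : Set V, IsCompOf G S C → HasCliqueMinorRootedAvoiding G (nbhd G C) C

theorem induce_singleton_connected {V : Type} (G : SimpleGraph V) (v : V) :
    (G.induce {v}).Connected := by
  rw [SimpleGraph.induce_singleton_eq_top]
  exact SimpleGraph.connected_top

/-- Distinct components of `G` minus `S` are disjoint. -/
theorem IsCompOf.disjoint_of_ne {V : Type} {G : SimpleGraph V} {S C D : Set V}
    (hC : IsCompOf G S C) (hD : IsCompOf G S D) (hne : C ≠ D) : Disjoint C D := by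
  obtain ⟨-, hCS, hCconn, hCmax⟩ := hC
  obtain ⟨-, hDS, hDconn, hDmax⟩ := hD
  by_contra h
  have hconn : (G.induce (C ∪ D)).Connected :=
    SimpleGraph.induce_union_connected hCconn.preconnected hDconn.preconnected
      (Set.not_disjoint_iff_nonempty_inter.mp h)
  have hdisj : Disjoint (C ∪ D) S := hCS.union_left hDS
  exact hne ((hCmax _ Set.subset_union_left hdisj hconn).symm.trans
    (hDmax _ Set.subset_union_right hdisj hconn))

/-- The neighborhood of a component of `G` minus `S` lies in `S`. -/
theorem IsCompOf.nbhd_subset {V : Type} {G : SimpleGraph V} {S C : Set V}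
    (hC : IsCompOf G S C) : nbhd G C ⊆ S := by
  obtain ⟨-, hCS, hCconn, hCmax⟩ := hC
  rintro v ⟨hvC, u, huC, huv⟩
  by_contra hvS
  have hconn : (G.induce (C ∪ {v})).Connected :=
    SimpleGraph.connected_induce_union hCconn.preconnected
      (induce_singleton_connected G v).preconnected huC rfl huv
  have heq := hCmax _ Set.subset_union_left
    (hCS.union_left (Set.disjoint_singleton_left.mpr hvS)) hconn
  exact hvC (heq ▸ Set.mem_union_right C rfl)

/-- Contracting a full component `D` into `q` yields a clique minor rooted on any `R ⊆ S`. -/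
theorem IsFullCompOf.hasCliqueMinorRootedAvoiding {V : Type} {G : SimpleGraph V}
    {S R C D : Set V} {q : V} (hD : IsFullCompOf G S D) (hq : G.IsClique (S \ {q}))
    (hRS : R ⊆ S) (hCR : Disjoint R C) (hCD : Disjoint D C) :
    HasCliqueMinorRootedAvoiding G R C := by
  obtain ⟨⟨-, hDS, hDconn, -⟩, hDfull⟩ := hD
  have hadj : ∀ v ∈ S, ∃ d ∈ D, G.Adj d v := fun v hv => by
    rw [← hDfull] at hv
    exact hv.2
  have hRD : ∀ v ∈ R, v ∉ D := fun v hv hvD => Set.disjoint_left.mp hDS hvD (hRS hv)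
  refine ⟨fun v => {x | x = v ∨ ((v : V) = q ∧ x ∈ D)}, fun v => Or.inl rfl, fun v => ?_,
    fun v => ?_, fun u v huv => ?_, fun u v huv => ?_⟩
  · rw [Set.disjoint_left]
    rintro x (rfl | ⟨-, hx⟩)
    · exact Set.disjoint_left.mp hCR v.2
    · exact Set.disjoint_left.mp hCD hx
  · beta_reduce
    by_cases hv : (v : V) = q
    · obtain ⟨d, hd, hdv⟩ := hadj v (hRS v.2)
      have hset : {x | x = (v : V) ∨ ((v : V) = q ∧ x ∈ D)} = {(v : V)} ∪ D := by
        ext x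
        simp [hv]
      rw [hset]
      exact SimpleGraph.connected_induce_union
        (induce_singleton_connected G v).preconnected hDconn.preconnected rfl hd hdv.symm
    · have hset : {x | x = (v : V) ∨ ((v : V) = q ∧ x ∈ D)} = {(v : V)} := by
        ext x
        simp [hv]
      rw [hset]
      exact induce_singleton_connected G v
  · rw [Set.disjoint_left]
    rintro x (rfl | ⟨hu, hx⟩) (hxv | ⟨hv, hxD⟩)
    · exact huv (Subtype.ext hxv)
    · exact hRD u u.2 hxD
    · exact hRD v v.2 (hxv ▸ hx)
    · exact huv (Subtype.ext (hu.trans hv.symm))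
  · have hne : (u : V) ≠ v := fun h => huv (Subtype.ext h)
    by_cases hu : (u : V) = q
    · obtain ⟨d, hd, hdv⟩ := hadj v (hRS v.2)
      exact ⟨d, Or.inr ⟨hu, hd⟩, v, Or.inl rfl, hdv⟩
    by_cases hv : (v : V) = q
    · obtain ⟨d, hd, hdu⟩ := hadj u (hRS u.2)
      exact ⟨u, Or.inl rfl, d, Or.inr ⟨hv, hd⟩, hdu.symm⟩
    · exact ⟨u, Or.inl rfl, v, Or.inl rfl, hq ⟨hRS u.2, hu⟩ ⟨hRS v.2, hv⟩ hne⟩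

/-- an almost-clique minimal separator is minor-safe. -/
theorem minorSafe_of_almostClique_minSep {V : Type} [Fintype V] (G : SimpleGraph V)
    (S : Set V) (hac : ∃ q ∈ S, G.IsClique (S \ {q})) (hminsep : IsMinSep G S) :
    MinorSafe G S := by
  obtain ⟨q, -, hq⟩ := hac
  obtain ⟨D₁, D₂, hD₁, hD₂, hne⟩ := hminsep
  intro C hC
  obtain ⟨D, hD, hDC⟩ : ∃ D, IsFullCompOf G S D ∧ D ≠ C := by
    by_cases h : D₁ = C
    · exact ⟨D₂, hD₂, fun h₂ => hne (h.trans h₂.symm)⟩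
    · exact ⟨D₁, hD₁, h⟩
  exact hD.hasCliqueMinorRootedAvoiding hq hC.nbhd_subset
    (Set.disjoint_left.mpr fun _ hv => hv.1) (hD.1.disjoint_of_ne hC hDC)
end

section
/- For every finite simple graph G, the treewidth tw(G) equals the smallest integer k such that there is a minimal triangulation H of G whose clique number ω(H) equals k + 1. -/
open SimpleGraph

/-- A walk in an induced subgraph, viewed as a walk in the whole graph. -/
lemma SimpleGraph.Walk.exists_of_induce {V : Type*} {G : SimpleGraph V} {A : Set V} {x y : A}
    (q : (G.induce A).Walk x y) : ∃ p : G.Walk x y, p.length = q.length ∧ (q.IsPath → p.IsPath) ∧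
      p.support = q.support.map Subtype.val ∧ p.edges = q.edges.map (Sym2.map Subtype.val) :=
  ⟨q.map (Embedding.induce A).toHom, q.length_map _, fun hq => hq.map Subtype.val_injective,
    q.support_map _, q.edges_map _⟩

/-- In a tree rooted at `r`, a connected set `A` of nodes has a topmost node `t`, and every path
from `r` to a node of `A` enters `A` at `t` and stays in `A` from then on. -/
lemma SimpleGraph.IsTree.exists_top {ι : Type*} {T : SimpleGraph ι} (hT : T.IsTree) (r : ι)
    {A : Set ι} (hA : (T.induce A).Connected) :
    ∃ t ∈ A, ∀ i ∈ A, ∀ p : T.Walk r i, p.IsPath →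
      p.getVert (T.dist r t) = t ∧ ∀ n, T.dist r t ≤ n → p.getVert n ∈ A := by
  classical
  obtain ⟨⟨a, ha⟩⟩ := hA.nonempty
  obtain ⟨t, htA, htmin⟩ := (measure (T.dist r)).wf.has_min A ⟨a, ha⟩
  refine ⟨t, htA, fun i hi p hp => ?_⟩
  obtain ⟨s, hs, hsl⟩ := hT.connected.exists_path_of_dist r t
  obtain ⟨q, hq⟩ := (hA.preconnected ⟨t, htA⟩ ⟨i, hi⟩).exists_isPath
  obtain ⟨q', -, hq', hqs, -⟩ := q.exists_of_induce
  replace hq' := hq' hq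
  have hqA : ∀ z ∈ q'.support, z ∈ A := by
    intro z hz
    rw [hqs, List.mem_map] at hz
    obtain ⟨z', -, rfl⟩ := hz
    exact z'.2
  have hsq : (s.append q').IsPath := by
    rw [Walk.isPath_def, Walk.support_append]
    refine List.Nodup.append hs.support_nodup (hq'.support_nodup.sublist (List.tail_sublist _)) ?_
    intro z hzs hzq
    have hzA := hqA z (List.mem_of_mem_tail hzq)
    have h1 : T.dist r t ≤ T.dist r z := not_lt.1 (htmin z hzA)
    have h2 := dist_le (s.takeUntil z hzs)
    have hzt : z = t := by
      by_contra hne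
      have := s.length_takeUntil_lt_length hzs hne
      omega
    subst hzt
    have := hq'.support_nodup
    rw [← Walk.cons_tail_support, List.nodup_cons] at this
    exact this.1 hzq
  have hpe : p = s.append q' := (hT.existsUnique_path r i).unique hp hsq
  subst hpe
  refine ⟨by rw [← hsl, Walk.getVert_append]; simp, fun n hn => ?_⟩
  rw [Walk.getVert_append, if_neg (by omega)]
  exact hqA _ (q'.getVert_mem_support _)

/-- A family of subtrees of a tree admits a choice of nodes `t` and a height function `h` such that
whenever two subtrees meet, the one of smaller height contains the chosen node of the other. -/
lemma SimpleGraph.IsTree.exists_roots {ι V : Type*} {T : SimpleGraph ι} (hT : T.IsTree)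
    (S : V → Set ι) :
    ∃ (t : V → ι) (h : V → ℕ), ∀ u v, (T.induce (S u)).Connected → (T.induce (S v)).Connected →
      (S u ∩ S v).Nonempty → h v ≤ h u → t u ∈ S v := by
  classical
  obtain ⟨r⟩ := hT.connected.nonempty
  have key : ∀ v, ∃ t, (T.induce (S v)).Connected → t ∈ S v ∧
      ∀ i ∈ S v, ∀ p : T.Walk r i, p.IsPath →
        p.getVert (T.dist r t) = t ∧ ∀ n, T.dist r t ≤ n → p.getVert n ∈ S v := by
    intro v
    by_cases hv : (T.induce (S v)).Connected
    · obtain ⟨t, ht⟩ := hT.exists_top r hv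
      exact ⟨t, fun _ => ht⟩
    · exact ⟨r, fun h => (hv h).elim⟩
  choose t ht using key
  refine ⟨t, fun v => T.dist r (t v), fun u v hu hv ⟨i, hiu, hiv⟩ hle => ?_⟩
  obtain ⟨p, hp, -⟩ := hT.existsUnique_path r i
  have h1 := ((ht u hu).2 i hiu p hp).1
  have h2 := ((ht v hv).2 i hiv p hp).2 _ hle
  rwa [h1] at h2

/-- Helly property of subtrees: finitely many pairwise intersecting subtrees have a common node. -/
lemma SimpleGraph.IsTree.exists_common_node {ι V : Type*} {T : SimpleGraph ι} (hT : T.IsTree)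
    (S : V → Set ι) (K : Finset V) (hconn : ∀ v ∈ K, (T.induce (S v)).Connected)
    (hmeet : ∀ u ∈ K, ∀ v ∈ K, u ≠ v → (S u ∩ S v).Nonempty) :
    ∃ i, ∀ v ∈ K, i ∈ S v := by
  obtain ⟨t, h, hth⟩ := hT.exists_roots S
  rcases K.eq_empty_or_nonempty with rfl | hK
  · obtain ⟨r⟩ := hT.connected.nonempty
    exact ⟨r, by simp⟩
  obtain ⟨u, huK, hu⟩ := K.exists_max_image h hK
  refine ⟨t u, fun v hv => hth u v (hconn u huK) (hconn v hv) ?_ (hu v hv)⟩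
  by_cases huv : u = v
  · subst huv
    obtain ⟨⟨i, hi⟩⟩ := (hconn u huK).nonempty
    exact ⟨i, hi, hi⟩
  · exact hmeet u huK v hv huv

lemma SimpleGraph.Walk.IsCycle.snd_penultimate_notMem_edges {V : Type*} {G : SimpleGraph V} {u : V}
    {c : G.Walk u u} (hc : c.IsCycle) (hl : 3 < c.length) : s(c.snd, c.penultimate) ∉ c.edges := by
  intro h
  have hadj : c.toSubgraph.Adj (c.getVert 1) c.penultimate :=
    Walk.adj_toSubgraph_iff_mem_edges.2 h
  have hmem : c.penultimate ∈ c.toSubgraph.neighborSet (c.getVert 1) := hadj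
  rw [hc.neighborSet_toSubgraph_internal one_ne_zero (by omega)] at hmem
  rcases hmem with h0 | h2
  · have := hc.getVert_injOn' (by simp) (by simp) h0
    omega
  · have := hc.getVert_injOn' (by simp) (by simp; omega) h2
    omega

/-- A graph is chordal if its vertices carry heights such that the neighbours of each vertex
that are not higher than it are pairwise adjacent. -/
lemma IsChordal.of_height {V : Type} {H : SimpleGraph V} (h : V → ℕ)
    (hH : ∀ u v w, H.Adj u v → H.Adj u w → h v ≤ h u → h w ≤ h u → v ≠ w → H.Adj v w) :
    IsChordal H := by
  classical
  intro v c hc hl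
  obtain ⟨u, hu, hmax⟩ := c.support.toFinset.exists_max_image h ⟨v, by simp⟩
  rw [List.mem_toFinset] at hu
  have hmem : ∀ z, z ∈ (c.rotate u hu).support ↔ z ∈ c.support := by
    intro z
    exact c.mem_support_rotate_iff u hu
  have hd : (c.rotate u hu).IsCycle := hc.rotate hu
  have hdl : 3 < (c.rotate u hu).length := by rwa [Walk.length_rotate]
  have hde : ∀ e, e ∈ (c.rotate u hu).edges ↔ e ∈ c.edges := fun e =>
    (c.rotate_edges u hu).mem_iff
  generalize c.rotate u hu = d at *
  have h1 : d.snd ∈ c.support := (hmem _).1 (d.getVert_mem_support _)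
  have h2 : d.penultimate ∈ c.support := (hmem _).1 (d.getVert_mem_support _)
  refine ⟨d.snd, d.penultimate, h1, h2, ?_, ?_⟩
  · exact hH u _ _ (d.adj_snd hd.not_nil) (d.adj_penultimate hd.not_nil).symm
      (hmax _ (by simpa using h1)) (hmax _ (by simpa using h2)) hd.snd_ne_penultimate
  · rw [← hde]
    exact hd.snd_penultimate_notMem_edges hdl

section

variable {V ι : Type} {G : SimpleGraph V}

lemma TreeDecomp.fill_adj (td : TreeDecomp G ι) {u v : V} :
    (fill G td).Adj u v ↔ u ≠ v ∧ ∃ i, u ∈ td.bag i ∧ v ∈ td.bag i := by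
  simp only [fill, sup_adj, fromRel_adj]
  constructor
  · rintro (h | ⟨h, ⟨i, hu, hv⟩ | ⟨i, hv, hu⟩⟩)
    · exact ⟨h.ne, td.edges_covered h⟩
    · exact ⟨h, i, hu, hv⟩
    · exact ⟨h, i, hu, hv⟩
  · exact fun h => Or.inr ⟨h.1, Or.inl h.2⟩

lemma TreeDecomp.isChordal_fill (td : TreeDecomp G ι) : IsChordal (fill G td) := by
  obtain ⟨t, h, hth⟩ := td.isTree.exists_roots fun v => {i | v ∈ td.bag i}
  refine IsChordal.of_height h fun u v w huv huw hv hw hne => ?_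
  rw [td.fill_adj] at huv huw ⊢
  exact ⟨hne, t u, hth u v (td.bags_connected u) (td.bags_connected v) huv.2 hv,
    hth u w (td.bags_connected u) (td.bags_connected w) huw.2 hw⟩

lemma TreeDecomp.exists_bag_of_isClique_fill (td : TreeDecomp G ι) {K : Finset V}
    (hK : (fill G td).IsClique K) : ∃ i, K ⊆ td.bag i :=
  td.isTree.exists_common_node (fun v => {i | v ∈ td.bag i}) K (fun v _ => td.bags_connected v)
    fun _ hu _ hv huv => (td.fill_adj.1 (hK hu hv huv)).2

lemma SimpleGraph.Walk.isChordless_of_length_eq_dist {V : Type*} {G : SimpleGraph V} {u v : V}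
    {p : G.Walk u v} (hp : p.length = G.dist u v) : p.IsChordless := by
  rw [Walk.isChordless_iff_forall_mem_edges]
  have key : ∀ i j, i < j → j ≤ p.length → G.Adj (p.getVert i) (p.getVert j) →
      s(p.getVert i, p.getVert j) ∈ p.edges := by
    intro i j hij hj hadj
    have h := dist_le ((p.take i).append (Walk.cons hadj (p.drop j)))
    simp only [Walk.length_append, Walk.length_cons, Walk.take_length, Walk.drop_length] at h
    obtain rfl : j = i + 1 := by omega
    exact Walk.adj_toSubgraph_iff_mem_edges.1 (p.toSubgraph_adj_getVert (by omega))
  intro a b ha hb hab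
  obtain ⟨i, rfl, hi⟩ := Walk.mem_support_iff_exists_getVert.1 ha
  obtain ⟨j, rfl, hj⟩ := Walk.mem_support_iff_exists_getVert.1 hb
  rcases lt_trichotomy i j with h | rfl | h
  · exact key i j h hj hab
  · exact (hab.ne rfl).elim
  · rw [Sym2.eq_swap]
    exact key j i h hi hab.symm

/-- In a chordal graph, two neighbours of `v` that both have a neighbour in a connected set `C`
avoiding the closed neighbourhood of `v` are adjacent. -/
lemma IsChordal.adj_of_common_component {H : SimpleGraph V} (hH : IsChordal H) {v x y : V}
    {C : Set V} (hC : (H.induce C).Preconnected) (hvC : ∀ c ∈ C, c ≠ v ∧ ¬ H.Adj v c)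
    (hvx : H.Adj v x) (hvy : H.Adj v y) (hxy : x ≠ y)
    (hx : ∃ c ∈ C, H.Adj c x) (hy : ∃ c ∈ C, H.Adj c y) : H.Adj x y := by
  by_contra hnadj
  obtain ⟨c, hc, hcx⟩ := hx
  obtain ⟨d, hd, hdy⟩ := hy
  have hCx : (H.induce (C ∪ {x})).Connected :=
    connected_induce_union hC .of_subsingleton hc (Set.mem_singleton x) hcx
  have hA : (H.induce (C ∪ {x} ∪ {y})).Connected :=
    connected_induce_union hCx.preconnected .of_subsingleton (Or.inl hd) (Set.mem_singleton y) hdy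
  set A : Set V := C ∪ {x} ∪ {y}
  have hxA : x ∈ A := Or.inl (Or.inr rfl)
  have hyA : y ∈ A := Or.inr rfl
  have hvA : v ∉ A := by
    rintro ((h | rfl) | rfl)
    · exact (hvC v h).1 rfl
    · exact hvx.ne rfl
    · exact hvy.ne rfl
  have hvadj : ∀ z ∈ A, H.Adj v z → z = x ∨ z = y := by
    rintro z ((h | h) | h) hz
    · exact ((hvC z h).2 hz).elim
    · exact Or.inl h
    · exact Or.inr h
  obtain ⟨q, hq, hql⟩ := hA.exists_path_of_dist ⟨x, hxA⟩ ⟨y, hyA⟩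
  have hqc := Walk.isChordless_iff_forall_mem_edges.1 (Walk.isChordless_of_length_eq_dist hql)
  have hq1 : 1 < q.length := by
    rw [hql]
    exact hA.one_lt_dist_of_ne_of_not_adj (by simpa using hxy) (by simpa using hnadj)
  obtain ⟨p, hpl, hpath, hps, hpe⟩ := q.exists_of_induce
  replace hpath := hpath hq
  have hpA : ∀ z ∈ p.support, z ∈ A := by
    intro z hz
    rw [hps, List.mem_map] at hz
    obtain ⟨z', -, rfl⟩ := hz
    exact z'.2
  have hvp : v ∉ p.support := fun h => hvA (hpA v h)
  have hpc : ∀ a ∈ p.support, ∀ b ∈ p.support, H.Adj a b → s(a, b) ∈ p.edges := by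
    intro a ha b hb hab
    rw [hps, List.mem_map] at ha hb
    obtain ⟨a', ha', rfl⟩ := ha
    obtain ⟨b', hb', rfl⟩ := hb
    rw [hpe]
    exact List.mem_map.2 ⟨s(a', b'), hqc ha' hb' hab, rfl⟩
  have hcyc : (Walk.cons hvx (p.concat hvy.symm)).IsCycle := by
    rw [Walk.cons_isCycle_iff]
    refine ⟨hpath.concat hvp hvy.symm, ?_⟩
    rw [Walk.edges_concat, List.concat_eq_append, List.mem_append, List.mem_singleton]
    rintro (h | h)
    · exact hvp (p.fst_mem_support_of_mem_edges h)
    · rw [Sym2.eq_iff] at h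
      rcases h with ⟨h, -⟩ | ⟨-, h⟩
      · exact hvy.ne h
      · exact hxy h
  obtain ⟨a, b, ha, hb, hab, hnot⟩ := hH _ hcyc (by simp; omega)
  have hmem : ∀ z, z ∈ (Walk.cons hvx (p.concat hvy.symm)).support → z = v ∨ z ∈ p.support := by
    intro z hz
    simp only [Walk.support_cons, Walk.support_concat, List.mem_cons, List.mem_append,
      List.not_mem_nil, or_false] at hz
    tauto
  simp only [Walk.edges_cons, Walk.edges_concat, List.concat_eq_append, List.mem_cons,
    List.mem_append, List.not_mem_nil, or_false, not_or] at hnot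
  obtain ⟨hn1, hn2, hn3⟩ := hnot
  rcases hmem a ha with rfl | ha' <;> rcases hmem b hb with rfl | hb'
  · exact hab.ne rfl
  · rcases hvadj b (hpA b hb') hab with rfl | rfl
    · exact hn1 rfl
    · exact hn3 Sym2.eq_swap
  · rcases hvadj a (hpA a ha') hab.symm with rfl | rfl
    · exact hn1 Sym2.eq_swap
    · exact hn3 rfl
  · exact hn2 (hpc a ha' b hb' hab)

/-- Every nonempty finite set `B` of vertices contains a nonempty connected subset `C` that
no vertex of `B \ C` is adjacent to. -/
lemma SimpleGraph.exists_connected_closed_subset (H : SimpleGraph V) {B : Finset V}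
    (hB : B.Nonempty) : ∃ C ⊆ B, (H.induce (C : Set V)).Connected ∧
      ∀ z ∈ B, (∃ c ∈ C, H.Adj c z) → z ∈ C := by
  classical
  obtain ⟨b, hb⟩ := hB
  obtain ⟨C, hC, hmax⟩ := (B.powerset.filter fun C : Finset V =>
    (H.induce (C : Set V)).Connected).exists_max_image Finset.card ⟨{b}, by
      simp only [Finset.mem_filter, Finset.mem_powerset, Finset.singleton_subset_iff, hb,
        true_and]
      rw [Finset.coe_singleton]
      exact .of_subsingleton⟩
  simp only [Finset.mem_filter, Finset.mem_powerset] at hC hmax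
  refine ⟨C, hC.1, hC.2, fun z hz ⟨c, hc, hcz⟩ => ?_⟩
  by_contra hzC
  have hconn : (H.induce ((insert z C : Finset V) : Set V)).Connected := by
    rw [Finset.coe_insert, Set.insert_eq, Set.union_comm]
    exact connected_induce_union hC.2.preconnected .of_subsingleton hc (Set.mem_singleton z) hcz
  have := hmax (insert z C) ⟨Finset.insert_subset hz hC.1, hconn⟩
  rw [Finset.card_insert_of_notMem hzC] at this
  omega

/-- Dirac's lemma: the subgraph of a chordal graph induced by a finite set `W` has a simplicial
vertex outside any given clique properly contained in `W`. -/
lemma IsChordal.exists_simplicial {H : SimpleGraph V} (hH : IsChordal H) (W : Finset V) :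
    ∀ K : Finset V, H.IsClique K → K ⊂ W →
      ∃ x ∈ W, x ∉ K ∧ H.IsClique {u | u ∈ W ∧ H.Adj x u} := by
  classical
  induction W using Finset.strongInduction with
  | H W ih =>
  intro K hK hKW
  by_cases hW : H.IsClique W
  · obtain ⟨x, hx, hxK⟩ := Finset.exists_of_ssubset hKW
    exact ⟨x, hx, hxK, hW.subset fun u hu => hu.1⟩
  obtain ⟨v, hv, z, hz, hzv, hvz, hKv⟩ : ∃ v ∈ W, ∃ z ∈ W, z ≠ v ∧ ¬ H.Adj v z ∧
      ∀ k ∈ K, k = v ∨ H.Adj v k := by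
    by_cases h : ∃ v ∈ K, ∃ z ∈ W, z ≠ v ∧ ¬ H.Adj v z
    · obtain ⟨v, hv, z, hz, hne, hadj⟩ := h
      exact ⟨v, hKW.1 hv, z, hz, hne, hadj, fun k hk => or_iff_not_imp_left.2 fun hkv =>
        hK hv hk (Ne.symm hkv)⟩
    · push Not at h
      obtain ⟨v, hv, z, hz, hne, hadj⟩ : ∃ v ∈ W, ∃ z ∈ W, v ≠ z ∧ ¬ H.Adj v z := by
        simpa [SimpleGraph.IsClique, Set.Pairwise] using hW
      exact ⟨v, hv, z, hz, hne.symm, hadj, fun k hk => or_iff_not_imp_left.2 fun hkv =>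
        (h k hk v hv (Ne.symm hkv)).symm⟩
  obtain ⟨C, hCB, hC, hclosed⟩ := H.exists_connected_closed_subset
    (B := W.filter fun z => z ≠ v ∧ ¬ H.Adj v z) ⟨z, by simp [hz, hzv, hvz]⟩
  have hCv : ∀ c ∈ C, c ∈ W ∧ c ≠ v ∧ ¬ H.Adj v c := fun c hc => by simpa using hCB hc
  let S := W.filter fun z => z ∉ C ∧ ∃ c ∈ C, H.Adj c z
  have hSdef : ∀ s, s ∈ S ↔ s ∈ W ∧ s ∉ C ∧ ∃ c ∈ C, H.Adj c s := fun s => by simp [S]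
  have hSv : ∀ s ∈ S, H.Adj v s := by
    intro s hs
    obtain ⟨hsW, hsC, c, hc, hcs⟩ := (hSdef s).1 hs
    by_contra hvs
    have hsv : s ≠ v := by
      rintro rfl
      exact (hCv c hc).2.2 hcs.symm
    exact hsC (hclosed s (by simp [hsW, hsv, hvs]) ⟨c, hc, hcs⟩)
  have hS : H.IsClique S := by
    intro s hs t ht hst
    exact hH.adj_of_common_component hC.preconnected (fun c hc => (hCv c hc).2) (hSv s hs) (hSv t ht)
      hst ((hSdef s).1 hs).2.2 ((hSdef t).1 ht).2.2
  obtain ⟨⟨c, hc⟩⟩ := hC.nonempty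
  have hsub : C ∪ S ⊂ W := by
    rw [Finset.ssubset_iff_of_subset]
    · refine ⟨v, hv, fun h => ?_⟩
      rcases Finset.mem_union.1 h with h | h
      · exact (hCv v h).2.1 rfl
      · exact (hSv v h).ne rfl
    · exact Finset.union_subset (fun c hc => (hCv c hc).1) (Finset.filter_subset _ _)
  obtain ⟨x, hx, hxS, hxs⟩ := ih (C ∪ S) hsub S hS (by
    rw [Finset.ssubset_iff_of_subset Finset.subset_union_right]
    exact ⟨c, Finset.mem_union_left _ hc, fun h => ((hSdef c).1 h).2.1 hc⟩)
  have hxC : x ∈ C := (Finset.mem_union.1 hx).resolve_right hxS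
  refine ⟨x, (hCv x hxC).1, fun hxK => ?_, hxs.subset ?_⟩
  · rcases hKv x hxK with h | h
    · exact (hCv x hxC).2.1 h
    · exact (hCv x hxC).2.2 h
  · rintro u ⟨huW, hxu⟩
    refine ⟨?_, hxu⟩
    by_cases huC : u ∈ C
    · exact Finset.mem_union_left _ huC
    · exact Finset.mem_union_right _ ((hSdef u).2 ⟨huW, huC, x, hxC, hxu⟩)

/-- The graph obtained from `T` by attaching a new leaf `none` to the vertex `i₀`. -/
def SimpleGraph.addLeaf {ι : Type*} (T : SimpleGraph ι) (i₀ : ι) : SimpleGraph (Option ι) :=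
  T.map some ⊔ edge (some i₀) none

section addLeaf

variable {κ : Type*} {T : SimpleGraph κ} {i₀ : κ}

lemma SimpleGraph.addLeaf_adj_some {i j : κ} :
    (T.addLeaf i₀).Adj (some i) (some j) ↔ T.Adj i j := by
  simp only [addLeaf, sup_adj, edge_adj, map_adj']
  simpa using fun h : T.Adj i j => h.ne

lemma SimpleGraph.addLeaf_adj_none {i : κ} : (T.addLeaf i₀).Adj (some i) none ↔ i = i₀ := by
  simp [addLeaf, edge_adj, map_adj']

lemma SimpleGraph.IsTree.addLeaf (hT : T.IsTree) (i₀ : κ) : (T.addLeaf i₀).IsTree where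
  connected := by
    rw [connected_iff_exists_forall_reachable]
    refine ⟨some i₀, fun o => ?_⟩
    cases o with
    | none => exact (addLeaf_adj_none.2 rfl).reachable
    | some i =>
      exact (hT.connected.preconnected i₀ i).map ⟨some, fun h => addLeaf_adj_some.2 h⟩
  isAcyclic := by
    have hbr : ∀ i j, T.Adj i j → ¬ ((T.addLeaf i₀).deleteEdges {s(some i, some j)}).Reachable
        (some i) (some j) := by
      intro i j hij h
      refine isAcyclic_iff_forall_adj_isBridge.1 hT.isAcyclic hij ?_
      rw [reachable_iff_reflTransGen] at h ⊢
      refine Relation.ReflTransGen.lift' (fun o : Option κ => o.getD i₀) (fun a b hab => ?_) _ _ h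
      rw [deleteEdges_adj] at hab
      obtain ⟨hab, hne⟩ := hab
      rcases a with _ | a <;> rcases b with _ | b
      · exact .refl
      · rw [addLeaf_adj_none.1 hab.symm]
        exact .refl
      · rw [addLeaf_adj_none.1 hab]
        exact .refl
      · refine .single ?_
        rw [addLeaf_adj_some] at hab
        rw [deleteEdges_adj]
        refine ⟨hab, fun h => hne ?_⟩
        simpa using h
    have hleaf : ∀ o, ((T.addLeaf i₀).deleteEdges {s(some i₀, none)}).Reachable none o →
        o = none := by
      intro o h
      rw [reachable_iff_reflTransGen] at h
      induction h with
      | refl => rfl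
      | @tail _ c _ hbc ih =>
        subst ih
        rw [deleteEdges_adj] at hbc
        rcases c with _ | c
        · rfl
        · rw [addLeaf_adj_none.1 hbc.1.symm] at hbc
          exact (hbc.2 (by simp [Sym2.eq_swap])).elim
    rw [isAcyclic_iff_forall_adj_isBridge]
    intro a b hab
    rw [isBridge_iff]
    rcases a with _ | a <;> rcases b with _ | b
    · exact (hab.ne rfl).elim
    · obtain rfl := addLeaf_adj_none.1 hab.symm
      rw [Sym2.eq_swap]
      exact fun h => Option.some_ne_none _ (hleaf _ h)
    · obtain rfl := addLeaf_adj_none.1 hab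
      exact fun h => Option.some_ne_none _ (hleaf _ h.symm)
    · exact hbr a b (addLeaf_adj_some.1 hab)

lemma SimpleGraph.connected_induce_addLeaf_image_some {A : Set κ} (hA : (T.induce A).Connected) :
    ((T.addLeaf i₀).induce (some '' A)).Connected := by
  refine hA.map (H := (T.addLeaf i₀).induce (some '' A))
    ⟨fun a : A => ⟨some a.1, a.1, a.2, rfl⟩, fun h => ?_⟩ ?_
  · exact addLeaf_adj_some.2 h
  · rintro ⟨_, a, ha, rfl⟩
    exact ⟨⟨a, ha⟩, rfl⟩

end addLeaf

/-- The subgraph of a chordal graph induced by a finite set has a tree-decomposition whose bags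
are cliques. -/
lemma IsChordal.exists_clique_tree {H : SimpleGraph V} (hH : IsChordal H) (W : Finset V) :
    ∃ (κ : Type) (T : SimpleGraph κ) (bag : κ → Finset V), T.IsTree ∧
      (∀ i, bag i ⊆ W ∧ H.IsClique (bag i)) ∧
      (∀ u ∈ W, ∀ v ∈ W, H.Adj u v → ∃ i, u ∈ bag i ∧ v ∈ bag i) ∧
      ∀ v ∈ W, (T.induce {i | v ∈ bag i}).Connected := by
  classical
  induction W using Finset.strongInduction with
  | H W ih =>
  rcases W.eq_empty_or_nonempty with rfl | hW
  · exact ⟨Unit, ⊥, fun _ => ∅, .of_subsingleton, by simp, by simp, by simp⟩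
  obtain ⟨x, hxW, -, hx⟩ := hH.exists_simplicial W ∅ (by simp) (by simpa using hW)
  obtain ⟨κ, T, bag, hT, hbag, hedge, hconn⟩ := ih _ (Finset.erase_ssubset hxW)
  let N := (W.erase x).filter fun u => H.Adj x u
  have hN : ∀ u, u ∈ N ↔ u ∈ W ∧ H.Adj x u := fun u => by
    simp only [N, Finset.mem_filter, Finset.mem_erase]
    exact ⟨fun h => ⟨h.1.2, h.2⟩, fun h => ⟨⟨h.2.ne', h.1⟩, h.2⟩⟩
  have hNW : N ⊆ W.erase x := Finset.filter_subset _ _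
  have hNclique : H.IsClique N := hx.subset fun u hu => (hN u).1 hu
  have hxbag : ∀ i, x ∉ bag i := fun i h => Finset.notMem_erase x W ((hbag i).1 h)
  obtain ⟨i₀, hi₀⟩ := hT.exists_common_node (fun v => {i | v ∈ bag i}) N
    (fun v hv => hconn v (hNW hv))
    (fun u hu v hv huv => hedge u (hNW hu) v (hNW hv) (hNclique hu hv huv))
  let bag' : Option κ → Finset V := fun o => o.elim (insert x N) bag
  refine ⟨Option κ, T.addLeaf i₀, bag', hT.addLeaf i₀, ?_, ?_, ?_⟩
  · rintro (_ | i)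
    · refine ⟨Finset.insert_subset hxW (hNW.trans (Finset.erase_subset _ _)), ?_⟩
      simp only [bag', Option.elim_none, Finset.coe_insert]
      exact hNclique.insert fun u hu _ => ((hN u).1 hu).2
    · exact ⟨(hbag i).1.trans (Finset.erase_subset _ _), (hbag i).2⟩
  · intro u hu v hv huv
    by_cases hux : u = x
    · subst hux
      exact ⟨none, Finset.mem_insert_self _ _, Finset.mem_insert_of_mem ((hN v).2 ⟨hv, huv⟩)⟩
    by_cases hvx : v = x
    · subst hvx
      exact ⟨none, Finset.mem_insert_of_mem ((hN u).2 ⟨hu, huv.symm⟩), Finset.mem_insert_self _ _⟩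
    obtain ⟨i, hi⟩ := hedge u (by simp [hux, hu]) v (by simp [hvx, hv]) huv
    exact ⟨some i, hi⟩
  · intro v hv
    by_cases hvx : v = x
    · have hset : {o | v ∈ bag' o} = {none} := by
        ext (_ | i) <;> simp [bag', hvx, hxbag]
      rw [hset]
      exact .of_subsingleton
    have himg := connected_induce_addLeaf_image_some (i₀ := i₀)
      (hconn v (Finset.mem_erase.2 ⟨hvx, hv⟩))
    by_cases hvN : v ∈ N
    · have hset : {o | v ∈ bag' o} = some '' {i | v ∈ bag i} ∪ {none} := by
        ext (_ | i) <;> simp [bag', hvN]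
      rw [hset]
      exact connected_induce_union himg.preconnected .of_subsingleton
        (Set.mem_image_of_mem some (hi₀ v hvN)) (Set.mem_singleton none) (addLeaf_adj_none.2 rfl)
    · have hset : {o | v ∈ bag' o} = some '' {i | v ∈ bag i} := by
        ext (_ | i) <;> simp [bag', hvx, hvN]
      rwa [hset]

lemma IsTriangulationOf.exists_treeDecomp [Fintype V] {H : SimpleGraph V}
    (hH : IsTriangulationOf H G) :
    ∃ (κ : Type) (td : TreeDecomp G κ), ∀ i, (td.bag i).card ≤ H.cliqueNum := by
  obtain ⟨κ, T, bag, hT, hbag, hedge, hconn⟩ := hH.1.exists_clique_tree Finset.univ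
  refine ⟨κ, ⟨T, hT, bag, fun v => ?_, fun u v huv => ?_, fun v => ?_⟩, fun i => ?_⟩
  · obtain ⟨⟨i, hi⟩⟩ := (hconn v (Finset.mem_univ v)).nonempty
    exact ⟨i, hi⟩
  · exact hedge u (Finset.mem_univ u) v (Finset.mem_univ v) (hH.2 huv)
  · exact hconn v (Finset.mem_univ v)
  · exact IsClique.card_le_cliqueNum (tc := (hbag i).2)

lemma IsTriangulationOf.exists_minimal_le [Finite V] {H : SimpleGraph V}
    (hH : IsTriangulationOf H G) : ∃ H' ≤ H, IsMinimalTriangulationOf H' G := by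
  obtain ⟨H', hle, hmin⟩ := exists_minimal_le_of_wellFoundedLT (IsTriangulationOf · G) H hH
  exact ⟨H', hle, hmin.prop, fun K hK hKH => hmin.eq_of_le hK hKH⟩

end

/-- `tw(G)` is the smallest `k` such that `G` has a minimal
triangulation with clique number `k + 1`. -/
theorem treewidth_eq_min_over_minimal_triangulations {V : Type} [Fintype V]
    (G : SimpleGraph V) :
    treewidth G = sInf {k : ℕ | ∃ H : SimpleGraph V,
      IsMinimalTriangulationOf H G ∧ H.cliqueNum = k + 1} := by
  have hmem : ∀ k, (∃ (ι : Type) (td : TreeDecomp G ι), ∀ i, (td.bag i).card ≤ k + 1) →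
      ∃ H, IsMinimalTriangulationOf H G ∧ H.cliqueNum ≤ k + 1 := by
    rintro k ⟨ι, td, htd⟩
    obtain ⟨H, hle, hH⟩ := IsTriangulationOf.exists_minimal_le ⟨td.isChordal_fill, le_sup_left⟩
    obtain ⟨K, hK⟩ := H.exists_isNClique_cliqueNum
    obtain ⟨i, hi⟩ := td.exists_bag_of_isClique_fill (hK.isClique.mono hle)
    exact ⟨H, hH, hK.card_eq ▸ (Finset.card_le_card hi).trans (htd i)⟩
  have htop : IsTriangulationOf ⊤ G := by
    exact ⟨IsChordal.of_height 0 fun _ _ _ _ _ _ _ h => h, le_top⟩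
  obtain ⟨κ, td, htd⟩ := htop.exists_treeDecomp
  have htw := Nat.sInf_mem (s := {k : ℕ | ∃ (ι : Type) (td : TreeDecomp G ι),
    ∀ i : ι, (td.bag i).card ≤ k + 1}) ⟨_, κ, td, fun i => (htd i).trans (Nat.le_succ _)⟩
  obtain ⟨H, hH, hHk⟩ := hmem _ htw
  apply le_antisymm
  · rcases Set.eq_empty_or_nonempty {k : ℕ | ∃ H : SimpleGraph V,
      IsMinimalTriangulationOf H G ∧ H.cliqueNum = k + 1} with hempty | hne
    · have h0 : H.cliqueNum = 0 := by
        by_contra h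
        exact hempty.subset ⟨H, hH, (Nat.succ_pred_eq_of_ne_zero h).symm⟩
      obtain ⟨ι, td, htd⟩ := hH.1.exists_treeDecomp
      refine (Nat.sInf_le ⟨ι, td, fun i => ?_⟩ : treewidth G ≤ 0).trans (Nat.zero_le _)
      exact (htd i).trans (by omega)
    · obtain ⟨H', hH', hk⟩ := Nat.sInf_mem hne
      obtain ⟨ι, td, htd⟩ := hH'.1.exists_treeDecomp
      exact Nat.sInf_le ⟨ι, td, fun i => (htd i).trans hk.le⟩
  · rcases Nat.eq_zero_or_pos H.cliqueNum with h0 | hpos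
    · have : IsEmpty V := by
        refine ⟨fun v => ?_⟩
        have : ({v} : Finset V).card ≤ H.cliqueNum := IsClique.card_le_cliqueNum (tc := by simp)
        simp [h0] at this
      have hempty : {k : ℕ | ∃ H : SimpleGraph V,
          IsMinimalTriangulationOf H G ∧ H.cliqueNum = k + 1} = ∅ := by
        ext k
        simp only [Set.mem_ofPred_eq, Set.mem_empty_iff_false, iff_false]
        rintro ⟨H', -, hk⟩
        obtain ⟨K, hK⟩ := H'.exists_isNClique_cliqueNum
        have := hK.card_eq
        rw [Finset.eq_empty_of_isEmpty K, Finset.card_empty] at this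
        omega
      rw [hempty, Nat.sInf_empty]
      exact Nat.zero_le _
    · have hpred : H.cliqueNum - 1 ∈ {k : ℕ | ∃ H : SimpleGraph V,
          IsMinimalTriangulationOf H G ∧ H.cliqueNum = k + 1} := ⟨H, hH, by omega⟩
      exact (Nat.sInf_le hpred).trans (Nat.sub_le_iff_le_add.2 hHk)
end
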